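/- For interval selection with proportional weights and revocable acceptances, 1-consistency is unattainable while maintaining bounded robustness: for every deterministic online algorithm A with revocable acceptances and every real c ≥ 1, if A is 1-consistent, then A is not c-robust, i.e., there exist an instance, a prediction assignment, and a maximum-weight feasible set OPT such that OPT > c·ALG. -/

import Mathlib

attribute [local instance] Classical.propDecidable

noncomputable section

/-- An interval `I = (s, f)` with `s < f`, occupying `[s, f)`. -/
structure Ivl where
  s : ℝ
  f : ℝ
  lt : s < f

namespace Ivl

/-- The set of points occupied by an interval: the half-open set `[s, f)`. -/
def occ (I : Ivl) : Set ℝ := Set.Ico I.s I.f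

/-- The length of an interval, `f - s` (also its proportional weight). -/
def len (I : Ivl) : ℝ := I.f - I.s

end Ivl

/-- Two intervals conflict if their occupied sets intersect. -/
def Conflict (I J : Ivl) : Prop := (I.occ ∩ J.occ).Nonempty

/-- A set of intervals is feasible if its elements are pairwise disjoint. -/
def Feasible (S : Finset Ivl) : Prop :=
  ∀ I ∈ S, ∀ J ∈ S, I ≠ J → ¬ Conflict I J

/-- The total (proportional) weight of a finite set of intervals. -/
def wsum (S : Finset Ivl) : ℝ := ∑ I ∈ S, I.len

/-- `opt` is a maximum-weight feasible subset of the instance's intervals,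
for proportional weights. -/
def IsMaxWeightOpt (inst : List Ivl) (opt : Finset Ivl) : Prop :=
  (∀ I ∈ opt, I ∈ inst) ∧ Feasible opt ∧
    ∀ T : Finset Ivl, (∀ I ∈ T, I ∈ inst) → Feasible T → wsum T ≤ wsum opt

/-- The solution of a deterministic online algorithm `A` with revocable
acceptances when run on the instance `inst` with predictions `Prd`:
`A` applied to the whole sequence of (interval, prediction) pairs. -/
def runRevocable (A : List (Ivl × Bool) → Finset Ivl) (Prd : Ivl → Bool)
    (inst : List Ivl) : Finset Ivl :=
  A (inst.map (fun I => (I, Prd I)))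

/-!
Let a long interval `I` conflict with a short `J` and with a `K` disjoint from `J`, where `I` is
longer than `c` times `J` but shorter than `J` and `K` together. The unique optimum of `I, J, K` is
`{J, K}`, so a 1-consistent algorithm given the corresponding predictions must end with `J`
accepted; rejections being final, it already holds `J`, and hence not `I`, before `K` is presented.
If `K` never arrives, the algorithm is left with `J` whereas `{I}` is optimal.
-/

theorem Ivl.len_pos (I : Ivl) : 0 < I.len :=
  sub_pos.2 I.lt

theorem wsum_singleton (I : Ivl) : wsum {I} = I.len :=
  Finset.sum_singleton _ _

theorem wsum_strictMono : StrictMono wsum := by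
  intro S T hST
  obtain ⟨I, hIT, hIS⟩ := Finset.exists_of_ssubset hST
  exact Finset.sum_lt_sum_of_subset hST.subset hIT hIS I.len_pos fun J _ _ => J.len_pos.le

theorem Conflict.refl (I : Ivl) : Conflict I I :=
  ⟨I.s, ⟨le_rfl, I.lt⟩, le_rfl, I.lt⟩

theorem Conflict.symm {I J : Ivl} (h : Conflict I J) : Conflict J I := by
  rwa [Conflict, Set.inter_comm]

theorem conflict_iff {I J : Ivl} : Conflict I J ↔ I.s < J.f ∧ J.s < I.f := by
  simp [Conflict, Ivl.occ, Set.Ico_inter_Ico, I.lt, J.lt, and_comm]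

theorem feasible_singleton (I : Ivl) : Feasible {I} := by
  simp [Feasible]

theorem feasible_pair {I J : Ivl} (h : ¬ Conflict I J) : Feasible {I, J} := by
  have h' : ¬ Conflict J I := fun hJI => h hJI.symm
  simp [Feasible, h, h']

section CommonConflict

variable {I : Ivl} {l : List Ivl} {T : Finset Ivl}

theorem Feasible.eq_singleton_or_subset_toFinset (hT : Feasible T) (hTl : ∀ X ∈ T, X ∈ I :: l)
    (hI : ∀ X ∈ l, Conflict I X) : T = {I} ∨ T ⊆ l.toFinset := by
  have hmem : ∀ X ∈ T, X ≠ I → X ∈ l := fun X hX hXI =>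
    (List.mem_cons.1 (hTl X hX)).resolve_left hXI
  by_cases hIT : I ∈ T
  · refine Or.inl (Finset.eq_singleton_iff_unique_mem.2 ⟨hIT, fun X hX => ?_⟩)
    by_contra hXI
    exact hT I hIT X hX (Ne.symm hXI) (hI X (hmem X hX hXI))
  · exact Or.inr fun X hX =>
      List.mem_toFinset.2 (hmem X hX (ne_of_mem_of_not_mem hX hIT))

theorem isMaxWeightOpt_cons_singleton (hI : ∀ X ∈ l, Conflict I X)
    (hle : wsum l.toFinset ≤ I.len) : IsMaxWeightOpt (I :: l) {I} := by
  refine ⟨by simp, feasible_singleton I, fun T hTl hT => ?_⟩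
  rcases hT.eq_singleton_or_subset_toFinset hTl hI with rfl | hsub
  · exact le_rfl
  · exact (wsum_strictMono.monotone hsub).trans (hle.trans_eq (wsum_singleton I).symm)

theorem isMaxWeightOpt_cons_toFinset (hI : ∀ X ∈ l, Conflict I X) (hl : Feasible l.toFinset)
    (hle : I.len ≤ wsum l.toFinset) : IsMaxWeightOpt (I :: l) l.toFinset := by
  refine ⟨fun X hX => List.mem_cons_of_mem I (List.mem_toFinset.1 hX), hl, fun T hTl hT => ?_⟩
  rcases hT.eq_singleton_or_subset_toFinset hTl hI with rfl | hsub
  · exact (wsum_singleton I).trans_le hle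
  · exact wsum_strictMono.monotone hsub

theorem IsMaxWeightOpt.eq_toFinset (hT : IsMaxWeightOpt (I :: l) T)
    (hI : ∀ X ∈ l, Conflict I X) (hl : Feasible l.toFinset)
    (hlt : I.len < wsum l.toFinset) : T = l.toFinset := by
  obtain ⟨hTl, hfeas, hmax⟩ := hT
  have hle : wsum l.toFinset ≤ wsum T :=
    hmax _ (fun X hX => List.mem_cons_of_mem I (List.mem_toFinset.1 hX)) hl
  rcases hfeas.eq_singleton_or_subset_toFinset hTl hI with rfl | hsub
  · exact absurd (wsum_singleton I ▸ hle) hlt.not_ge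
  · exact eq_of_le_of_not_lt hsub fun hss => (wsum_strictMono hss).not_ge hle

end CommonConflict

/-- `A` is a deterministic online algorithm with revocable acceptances, as a function from the
(interval, prediction) pairs presented so far to the current solution: it keeps the solution
feasible, and a new item can only add its own interval. -/
structure IsRevocableOnline (A : List (Ivl × Bool) → Finset Ivl) : Prop where
  nil : A [] = ∅
  feasible : ∀ σ, Feasible (A σ)
  append_singleton_subset : ∀ σ x, A (σ ++ [x]) ⊆ insert x.1 (A σ)

/-- `γ`-consistency: `A` is `γ`-competitive on every instance whose predictions are accurate with
respect to some optimum. As in `runRevocable`, predictions are a function of the interval, which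
loses nothing because the intervals of an instance are distinct. -/
def IsConsistent (γ : ℝ) (A : List (Ivl × Bool) → Finset Ivl) : Prop :=
  ∀ (inst : List Ivl) (Prd : Ivl → Bool) (opt : Finset Ivl),
    inst.Nodup → IsMaxWeightOpt inst opt → (∀ I ∈ inst, (Prd I = true ↔ I ∈ opt)) →
    wsum opt ≤ γ * wsum (runRevocable A Prd inst)

namespace IsRevocableOnline

variable {A : List (Ivl × Bool) → Finset Ivl} {Prd : Ivl → Bool}

theorem run_append_subset (hA : IsRevocableOnline A) (l₁ l₂ : List Ivl) :
    runRevocable A Prd (l₁ ++ l₂) ⊆ runRevocable A Prd l₁ ∪ l₂.toFinset := by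
  induction l₂ using List.reverseRecOn with
  | nil => simp
  | append_singleton l₂ X ih =>
    calc runRevocable A Prd (l₁ ++ (l₂ ++ [X]))
        ⊆ insert X (runRevocable A Prd (l₁ ++ l₂)) := by
          simpa [runRevocable] using
            hA.append_singleton_subset ((l₁ ++ l₂).map fun I => (I, Prd I)) (X, Prd X)
      _ ⊆ insert X (runRevocable A Prd l₁ ∪ l₂.toFinset) := Finset.insert_subset_insert X ih
      _ = runRevocable A Prd l₁ ∪ (l₂ ++ [X]).toFinset := by
          simp [List.toFinset_append]

theorem mem_of_mem_run (hA : IsRevocableOnline A) {l : List Ivl} {X : Ivl}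
    (hX : X ∈ runRevocable A Prd l) : X ∈ l := by
  simpa [runRevocable, hA.nil] using hA.run_append_subset [] l hX

theorem isMaxWeightOpt_run (hA : IsRevocableOnline A) (hcons : IsConsistent 1 A)
    {inst : List Ivl} {opt : Finset Ivl} (hnodup : inst.Nodup) (hopt : IsMaxWeightOpt inst opt)
    (hPrd : ∀ I ∈ inst, (Prd I = true ↔ I ∈ opt)) :
    IsMaxWeightOpt inst (runRevocable A Prd inst) := by
  refine ⟨fun X hX => hA.mem_of_mem_run hX, hA.feasible _, fun T hTinst hT => ?_⟩
  calc wsum T ≤ wsum opt := hopt.2.2 T hTinst hT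
    _ ≤ 1 * wsum (runRevocable A Prd inst) := hcons inst Prd opt hnodup hopt hPrd
    _ = wsum (runRevocable A Prd inst) := one_mul _

theorem run_cons_eq_toFinset (hA : IsRevocableOnline A) (hcons : IsConsistent 1 A)
    {I : Ivl} {l₁ l₂ : List Ivl} (hnodup : (I :: (l₁ ++ l₂)).Nodup) (hne : l₁ ≠ [])
    (hI : ∀ X ∈ l₁ ++ l₂, Conflict I X) (hl : Feasible (l₁ ++ l₂).toFinset)
    (hlt : I.len < wsum (l₁ ++ l₂).toFinset)
    (hPrd : ∀ X ∈ I :: (l₁ ++ l₂), (Prd X = true ↔ X ∈ (l₁ ++ l₂).toFinset)) :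
    runRevocable A Prd (I :: l₁) = l₁.toFinset := by
  obtain ⟨hI_notMem, hnodup_append⟩ := List.nodup_cons.1 hnodup
  have hfinal : runRevocable A Prd (I :: l₁ ++ l₂) = (l₁ ++ l₂).toFinset :=
    (hA.isMaxWeightOpt_run hcons hnodup (isMaxWeightOpt_cons_toFinset hI hl hlt.le)
      hPrd).eq_toFinset hI hl hlt
  have hheld : l₁.toFinset ⊆ runRevocable A Prd (I :: l₁) := by
    intro X hX
    have hX₁ : X ∈ l₁ := List.mem_toFinset.1 hX
    have hX_final : X ∈ runRevocable A Prd (I :: l₁ ++ l₂) := by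
      rw [hfinal]
      exact List.mem_toFinset.2 (List.mem_append_left l₂ hX₁)
    refine (Finset.mem_union.1 (hA.run_append_subset _ _ hX_final)).resolve_right fun hX₂ => ?_
    exact List.disjoint_of_nodup_append hnodup_append hX₁ (List.mem_toFinset.1 hX₂)
  rcases (hA.feasible _).eq_singleton_or_subset_toFinset (fun X hX => hA.mem_of_mem_run hX)
    (fun X hX => hI X (List.mem_append_left l₂ hX)) with hrun | hrun
  · obtain ⟨X, hX⟩ := List.exists_mem_of_ne_nil l₁ hne
    have hXI : X = I := Finset.mem_singleton.1 (hrun ▸ hheld (List.mem_toFinset.2 hX))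
    exact absurd (List.mem_append_left l₂ (hXI ▸ hX)) hI_notMem
  · exact hrun.antisymm hheld

end IsRevocableOnline

theorem exists_conflict_len_lt {c : ℝ} (hc : 0 ≤ c) :
    ∃ I J K : Ivl, Conflict I J ∧ Conflict I K ∧ ¬ Conflict J K ∧
      c * J.len < I.len ∧ I.len < J.len + K.len := by
  refine ⟨⟨0, 2 * c + 2, by linarith⟩, ⟨-1, 1, by norm_num⟩, ⟨1, 2 * c + 2, by linarith⟩, ?_⟩
  simp only [conflict_iff, Ivl.len]
  refine ⟨⟨?_, ?_⟩, ⟨?_, ?_⟩, fun h => ?_, ?_, ?_⟩ <;> linarith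

theorem one_consistency_excludes_bounded_robustness
    (A : List (Ivl × Bool) → Finset Ivl)
    (hstart : A [] = ∅)
    (hfeas : ∀ σ : List (Ivl × Bool), Feasible (A σ))
    (honline : ∀ (σ : List (Ivl × Bool)) (x : Ivl × Bool),
      A (σ ++ [x]) ⊆ insert x.1 (A σ))
    (c : ℝ) (hc : 1 ≤ c)
    (hconsistent : ∀ (inst : List Ivl) (Prd : Ivl → Bool) (opt : Finset Ivl),
      inst.Nodup → IsMaxWeightOpt inst opt →
      (∀ I ∈ inst, (Prd I = true ↔ I ∈ opt)) →
      wsum opt ≤ 1 * wsum (runRevocable A Prd inst)) :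
    ∃ (inst : List Ivl) (Prd : Ivl → Bool) (opt : Finset Ivl),
      inst.Nodup ∧ IsMaxWeightOpt inst opt ∧
      wsum opt > c * wsum (runRevocable A Prd inst) := by
  have hA : IsRevocableOnline A := ⟨hstart, hfeas, honline⟩
  obtain ⟨I, J, K, hIJ, hIK, hJK, hlong, hshort⟩ :=
    exists_conflict_len_lt (zero_le_one.trans hc)
  have hJ_ne_K : J ≠ K := fun h => hJK (h ▸ Conflict.refl J)
  have hI_ne_J : I ≠ J := fun h => hJK (h ▸ hIK)
  have hI_ne_K : I ≠ K := fun h => hJK (h ▸ hIJ).symm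
  let Prd : Ivl → Bool := fun X => decide (X ∈ [J, K].toFinset)
  have halg : runRevocable A Prd [I, J] = {J} := by
    refine hA.run_cons_eq_toFinset hconsistent (l₁ := [J]) (l₂ := [K]) ?_ ?_ ?_ ?_ ?_ ?_
    · simp [hI_ne_J, hI_ne_K, hJ_ne_K]
    · simp
    · simp [hIJ, hIK]
    · simpa using feasible_pair hJK
    · simpa [wsum, Finset.sum_pair hJ_ne_K] using hshort
    · simp [Prd]
  have hJ_le_I : J.len ≤ I.len := (le_mul_of_one_le_left J.len_pos.le hc).trans hlong.le
  refine ⟨[I, J], Prd, {I}, by simp [hI_ne_J], ?_, ?_⟩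
  · exact isMaxWeightOpt_cons_singleton (by simpa using hIJ) (by simpa [wsum] using hJ_le_I)
  · rwa [halg, wsum_singleton, wsum_singleton]
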